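/- For every integer t ≥ 4, the monomial w_2^{2^{t-2}}·w_3^{2^{t-2}-1} belongs to the ideal I_{2^t-2,4} of F_2[w_2,w_3,w_4]. -/

import Mathlib

open MvPolynomial

/-- The polynomials `g_r = g_r^{(4)}` in `F_2[w_2,w_3,w_4]` (variables `X 0 = w_2`,
`X 1 = w_3`, `X 2 = w_4`): `g_0 = 1`, `g_r = 0` for `r < 0`, and
`g_r = w_2·g_{r-2} + w_3·g_{r-3} + w_4·g_{r-4}` for `r ≥ 1`. -/
noncomputable def g4 : ℤ → MvPolynomial (Fin 3) (ZMod 2)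
  | r =>
    if r ≤ 0 then (if r = 0 then 1 else 0)
    else X 0 * g4 (r - 2) + X 1 * g4 (r - 3) + X 2 * g4 (r - 4)
  termination_by r => r.toNat
  decreasing_by all_goals omega

/-- The ideal `I_{n,4} = (g_{n-3}, g_{n-2}, g_{n-1}, g_n)` of `F_2[w_2,w_3,w_4]`. -/
noncomputable def I4 (n : ℤ) : Ideal (MvPolynomial (Fin 3) (ZMod 2)) :=
  Ideal.span {g4 (n - 3), g4 (n - 2), g4 (n - 1), g4 n}

/-!
Put `u n = g_{n-3}`. Then `u` solves, on all of `ℕ`, the linear recurrence with characteristic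
polynomial `P = T⁴ - w₂ T² - w₃ T - w₄`, and `u` starts with `0, 0, 0, 1`. A multiple of `P`,
evaluated at the shift operator, still annihilates `u`; for the multiple `P ^ q` with `q = 2 ^ k`
this reads `u (n + 4q) = w₂^q u (n + 2q) + w₃^q u (n + q) + w₄^q u n`. The cases `n = 0` and
`n = 2q` give `u q = 0` and `u (3q) = w₃^(q-1)` by induction on `k`, and then `n = q` gives
`u (5q) = w₂^q w₃^(q-1)`. The ideal `I_{n,4}` is generated by four consecutive terms
`u n, …, u (n + 3)`, hence contains all later terms; for `n = 4q - 2` one of these is `u (5q)`.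
-/

section Recurrence

/-- The shift operator `u ↦ (n ↦ u (n + 1))` on sequences. Evaluating polynomials at it turns a
linear recurrence into the vanishing of its characteristic polynomial on the solutions. -/
def seqShift (R : Type*) [CommSemiring R] : Module.End R (ℕ → R) :=
  LinearMap.funLeft R R (· + 1)

theorem seqShift_pow_apply {R : Type*} [CommSemiring R] (k : ℕ) (u : ℕ → R) (n : ℕ) :
    (seqShift R ^ k) u n = u (n + k) := by
  induction k generalizing n with
  | zero => rfl
  | succ k ih =>
    rw [pow_succ', Module.End.mul_apply, seqShift, LinearMap.funLeft_apply, ← seqShift, ih,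
      add_right_comm, add_assoc]

theorem aeval_seqShift_monomial_apply {R : Type*} [CommSemiring R] (k : ℕ) (a : R) (u : ℕ → R)
    (n : ℕ) : Polynomial.aeval (seqShift R) (Polynomial.monomial k a) u n = a * u (n + k) := by
  rw [Polynomial.aeval_monomial, Module.End.mul_apply, Module.algebraMap_end_apply, Pi.smul_apply,
    seqShift_pow_apply, smul_eq_mul]

theorem mem_ideal_of_isSolution {R : Type*} [CommSemiring R] {E : LinearRecurrence R} {u : ℕ → R}
    (hu : E.IsSolution u) {J : Ideal R} {m : ℕ} (hJ : ∀ i < E.order, u (m + i) ∈ J) (k : ℕ) :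
    u (m + k) ∈ J := by
  induction k using Nat.strong_induction_on with
  | _ k ih =>
    obtain hk | hk := lt_or_ge k E.order
    · exact hJ k hk
    · obtain ⟨j, rfl⟩ := Nat.exists_eq_add_of_le' hk
      rw [← add_assoc, hu]
      refine J.sum_mem fun i _ ↦ J.mul_mem_left _ ?_
      rw [add_assoc]
      exact ih _ (by lia)

variable {R : Type*} [CommRing R] {E : LinearRecurrence R} {u : ℕ → R}

theorem isSolution_iff_aeval_seqShift_charPoly :
    E.IsSolution u ↔ Polynomial.aeval (seqShift R) E.charPoly u = 0 := by
  simp only [LinearRecurrence.IsSolution, LinearRecurrence.charPoly, funext_iff, map_sub, map_sum,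
    LinearMap.sub_apply, LinearMap.sum_apply, Pi.sub_apply, Finset.sum_apply,
    aeval_seqShift_monomial_apply, one_mul, Pi.zero_apply, sub_eq_zero]

variable (p : ℕ) [ExpChar R p]

theorem charPoly_pow_expChar_pow (k : ℕ) :
    E.charPoly ^ p ^ k = Polynomial.monomial (p ^ k * E.order) 1 -
      ∑ i : Fin E.order, Polynomial.monomial (p ^ k * i) (E.coeffs i ^ p ^ k) := by
  simp only [LinearRecurrence.charPoly, sub_pow_expChar_pow, sum_pow_char_pow,
    Polynomial.monomial_pow, one_pow, mul_comm]

theorem apply_add_expChar_pow_mul_order_of_isSolution (hu : E.IsSolution u) (k n : ℕ) :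
    u (n + p ^ k * E.order) = ∑ i, E.coeffs i ^ p ^ k * u (n + p ^ k * i) := by
  have annihilates : Polynomial.aeval (seqShift R) (E.charPoly ^ p ^ k) u = 0 := by
    rw [← pow_sub_one_mul (expChar_pow_pos R p k).ne', map_mul, Module.End.mul_apply,
      isSolution_iff_aeval_seqShift_charPoly.mp hu, map_zero]
  have at_n := congrFun annihilates n
  simpa only [charPoly_pow_expChar_pow, map_sub, map_sum, LinearMap.sub_apply,
    LinearMap.sum_apply, Pi.sub_apply, Finset.sum_apply, aeval_seqShift_monomial_apply, one_mul,
    Pi.zero_apply, sub_eq_zero] using at_n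

end Recurrence

/-- The recurrence `u (n + 4) = w₂ u (n + 2) + w₃ u (n + 1) + w₄ u n`, whose characteristic
polynomial is the depressed quartic `T⁴ - w₂ T² - w₃ T - w₄`. -/
def depressedQuartic {R : Type*} [CommSemiring R] (w₂ w₃ w₄ : R) : LinearRecurrence R where
  order := 4
  coeffs := ![w₄, w₃, w₂, 0]

namespace depressedQuartic

theorem isSolution_iff {R : Type*} [CommSemiring R] {w₂ w₃ w₄ : R} {u : ℕ → R} :
    (depressedQuartic w₂ w₃ w₄).IsSolution u ↔
      ∀ n, u (n + 4) = w₂ * u (n + 2) + w₃ * u (n + 1) + w₄ * u n := by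
  refine forall_congr' fun n ↦ ?_
  change u (n + 4) = ∑ i : Fin 4, ![w₄, w₃, w₂, 0] i * u (n + i) ↔ _
  simp [Fin.sum_univ_four, add_assoc, add_comm, add_left_comm]

variable {R : Type*} [CommRing R] [CharP R 2] {w₂ w₃ w₄ : R} {u : ℕ → R}

theorem apply_add_four_mul_two_pow (hu : (depressedQuartic w₂ w₃ w₄).IsSolution u) (k n : ℕ) :
    u (n + 4 * 2 ^ k) = w₂ ^ 2 ^ k * u (n + 2 * 2 ^ k) + w₃ ^ 2 ^ k * u (n + 2 ^ k) +
      w₄ ^ 2 ^ k * u n := by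
  have frobenius : u (n + 2 ^ k * 4) =
      ∑ i : Fin 4, ![w₄, w₃, w₂, 0] i ^ 2 ^ k * u (n + 2 ^ k * i) :=
    apply_add_expChar_pow_mul_order_of_isSolution 2 hu k n
  rw [mul_comm 4, frobenius]
  simp [Fin.sum_univ_four, mul_comm _ 2, add_assoc, add_comm]

theorem apply_two_pow_eq_zero (hu : (depressedQuartic w₂ w₃ w₄).IsSolution u)
    (h₀ : u 0 = 0) (h₁ : u 1 = 0) (h₂ : u 2 = 0) (k : ℕ) : u (2 ^ k) = 0 := by
  induction k using Nat.twoStepInduction with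
  | zero => exact h₁
  | one => exact h₂
  | more k ih ih' =>
    calc u (2 ^ (k + 2)) = u (0 + 4 * 2 ^ k) := by ring_nf
      _ = w₂ ^ 2 ^ k * u (2 ^ (k + 1)) + w₃ ^ 2 ^ k * u (2 ^ k) + w₄ ^ 2 ^ k * u 0 := by
        rw [apply_add_four_mul_two_pow hu]
        ring_nf
      _ = 0 := by rw [ih', ih, h₀, mul_zero, mul_zero, mul_zero, add_zero, add_zero]

theorem apply_three_mul_two_pow (hu : (depressedQuartic w₂ w₃ w₄).IsSolution u)
    (h₀ : u 0 = 0) (h₁ : u 1 = 0) (h₂ : u 2 = 0) (k : ℕ) :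
    u (3 * 2 ^ k) = w₃ ^ (2 ^ k - 1) * u 3 := by
  induction k with
  | zero => simp
  | succ k ih =>
    have vanish := apply_two_pow_eq_zero hu h₀ h₁ h₂
    calc u (3 * 2 ^ (k + 1)) = u (2 ^ (k + 1) + 4 * 2 ^ k) := by ring_nf
      _ = w₂ ^ 2 ^ k * u (2 ^ (k + 2)) + w₃ ^ 2 ^ k * u (3 * 2 ^ k) +
            w₄ ^ 2 ^ k * u (2 ^ (k + 1)) := by
        rw [apply_add_four_mul_two_pow hu]
        ring_nf
      _ = w₃ ^ (2 ^ k + (2 ^ k - 1)) * u 3 := by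
        rw [vanish, vanish, ih]
        ring
      _ = w₃ ^ (2 ^ (k + 1) - 1) * u 3 := by
        rw [← Nat.add_sub_assoc Nat.one_le_two_pow, pow_succ, mul_two]

theorem apply_five_mul_two_pow (hu : (depressedQuartic w₂ w₃ w₄).IsSolution u)
    (h₀ : u 0 = 0) (h₁ : u 1 = 0) (h₂ : u 2 = 0) (k : ℕ) :
    u (5 * 2 ^ k) = w₂ ^ 2 ^ k * w₃ ^ (2 ^ k - 1) * u 3 := by
  have vanish := apply_two_pow_eq_zero hu h₀ h₁ h₂
  calc u (5 * 2 ^ k) = u (2 ^ k + 4 * 2 ^ k) := by ring_nf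
    _ = w₂ ^ 2 ^ k * u (3 * 2 ^ k) + w₃ ^ 2 ^ k * u (2 ^ (k + 1)) + w₄ ^ 2 ^ k * u (2 ^ k) := by
      rw [apply_add_four_mul_two_pow hu]
      ring_nf
    _ = w₂ ^ 2 ^ k * w₃ ^ (2 ^ k - 1) * u 3 := by
      rw [vanish, vanish, apply_three_mul_two_pow hu h₀ h₁ h₂]
      ring

end depressedQuartic

theorem g4_of_neg {r : ℤ} (hr : r < 0) : g4 r = 0 := by
  rw [g4, if_pos hr.le, if_neg hr.ne]

theorem g4_zero : g4 0 = 1 := by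
  rw [g4, if_pos le_rfl, if_pos rfl]

theorem g4_of_pos {r : ℤ} (hr : 0 < r) :
    g4 r = X 0 * g4 (r - 2) + X 1 * g4 (r - 3) + X 2 * g4 (r - 4) := by
  rw [g4, if_neg hr.not_ge]

theorem isSolution_g4_sub_three :
    (depressedQuartic (X 0) (X 1) (X 2)).IsSolution fun n : ℕ ↦ g4 (n - 3) := by
  refine depressedQuartic.isSolution_iff.mpr fun n ↦ ?_
  rw [g4_of_pos (by lia)]
  push_cast
  ring_nf

theorem g4_five_mul_two_pow_sub_three (k : ℕ) :
    g4 (5 * 2 ^ k - 3) = X 0 ^ 2 ^ k * X 1 ^ (2 ^ k - 1) := by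
  have h := depressedQuartic.apply_five_mul_two_pow isSolution_g4_sub_three
    (g4_of_neg (by norm_num)) (g4_of_neg (by norm_num)) (g4_of_neg (by norm_num)) k
  simpa [g4_zero] using h

theorem g4_sub_three_mem_I4 {n m : ℕ} (hnm : n ≤ m) : g4 (m - 3) ∈ I4 n := by
  obtain ⟨k, rfl⟩ := Nat.exists_eq_add_of_le hnm
  refine mem_ideal_of_isSolution isSolution_g4_sub_three (fun i hi ↦ Ideal.subset_span ?_) k
  change i < 4 at hi
  interval_cases i
  all_goals
    push_cast
    ring_nf
    simp

/-- Lemma 5.3(a): for every `t ≥ 4`, `w_2^{2^{t-2}} w_3^{2^{t-2}-1} ∈ I_{2^t-2,4}`. -/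
theorem stmt15 (t : ℕ) (ht : 4 ≤ t) :
    (X 0 : MvPolynomial (Fin 3) (ZMod 2)) ^ 2 ^ (t - 2) * X 1 ^ (2 ^ (t - 2) - 1)
      ∈ I4 (2 ^ t - 2) := by
  obtain ⟨k, rfl⟩ : ∃ k, t = k + 2 := Nat.exists_eq_add_of_le' (by lia)
  have index_le : 2 ^ (k + 2) - 2 ≤ 5 * 2 ^ k := by lia
  have cast_index : ((2 ^ (k + 2) - 2 : ℕ) : ℤ) = 2 ^ (k + 2) - 2 := by
    rw [Nat.cast_sub (Nat.le_self_pow (by lia) 2)]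
    norm_num
  have mem := g4_sub_three_mem_I4 index_le
  rw [cast_index] at mem
  push_cast at mem
  rwa [g4_five_mul_two_pow_sub_three] at mem
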